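/- There exists an arithmetic function h : ℕ → ℝ such that ∑_{n≥1} |h(n)| n^{-σ} converges for every σ > 1/2, and for every complex s with Re s > 1 one has ∑_{m₁,m₂ ≥ 1, m₁m₂ a perfect square} s(m₁,m₂)/(m₁m₂)^s = ζ(2s−1) · ∑_{n≥1} h(n) n^{-s}, where ζ is the Riemann zeta function. -/

import Mathlib

open scoped Classical
/-- `numSubgroups m₁ m₂` is the number of subgroups of the additive group
`ℤ_{m₁} × ℤ_{m₂}`. -/
noncomputable def numSubgroups (m₁ m₂ : ℕ) : ℕ :=
  Nat.card (AddSubgroup (ZMod m₁ × ZMod m₂))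

/-! A subgroup of `A × B` is a homomorphism from a subgroup of `A` to a quotient of `B`. For cyclic
groups this gives `s(m, n) = ∑_{d ∣ m, e ∣ n} gcd(d, e) = ∑_{c ∣ gcd(m, n)} φ(c) τ(m/c) τ(n/c)`.
Summing over `m * n = k²` yields the Dirichlet convolution `φ * G` with `G(k) = (τ * τ)(k²)`. Since
`φ = id * μ`, this is `id * (μ * G)`; the factor `id`, evaluated at `2s`, contributes `ζ(2s - 1)`,
and `h` is `μ * G` placed on the squares. For the convergence, `G ≤ τ⁶`, and the Dirichlet series of
every power of `τ` converges absolutely for `Re s > 1`: as `τ` is submultiplicative,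
`τ^(k+1) ≤ τ^k * τ^k`. -/

section ProductSubgroups

variable {A B : Type*} [AddGroup A] [AddCommGroup B]

/-- The subgroup of `A × B` of all `(a, b)` with `a ∈ K` and `f a = b` modulo `L`. Every subgroup of
`A × B` has this form for exactly one triple `(K, L, f)`. -/
def graphMod (K : AddSubgroup A) (L : AddSubgroup B) (f : K →+ B ⧸ L) : AddSubgroup (A × B) :=
  (f.graph.comap ((AddMonoidHom.id K).prodMap (QuotientAddGroup.mk' L))).map
    (K.subtype.prodMap (AddMonoidHom.id B))

lemma mem_graphMod {K : AddSubgroup A} {L : AddSubgroup B} {f : K →+ B ⧸ L} {a : A} {b : B} :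
    (a, b) ∈ graphMod K L f ↔ ∃ ha : a ∈ K, f ⟨a, ha⟩ = b := by
  simp [graphMod, AddMonoidHom.mem_graph]

lemma fst_map_graphMod (K : AddSubgroup A) (L : AddSubgroup B) (f : K →+ B ⧸ L) :
    (graphMod K L f).map (AddMonoidHom.fst A B) = K := by
  ext a
  constructor
  · rintro ⟨⟨a, b⟩, hab, rfl⟩
    exact (mem_graphMod.1 hab).1
  · intro ha
    obtain ⟨b, hb⟩ := QuotientAddGroup.mk_surjective (f ⟨a, ha⟩)
    exact ⟨(a, b), mem_graphMod.2 ⟨ha, hb.symm⟩, rfl⟩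

lemma inr_comap_graphMod (K : AddSubgroup A) (L : AddSubgroup B) (f : K →+ B ⧸ L) :
    (graphMod K L f).comap (AddMonoidHom.inr A B) = L := by
  ext b
  have f_zero : f ⟨0, K.zero_mem⟩ = 0 := map_zero f
  simp only [AddSubgroup.mem_comap, AddMonoidHom.inr_apply, mem_graphMod, f_zero, K.zero_mem,
    exists_true_left]
  rw [eq_comm, QuotientAddGroup.eq_zero_iff]

lemma graphMod_injective :
    Function.Injective fun x : Σ K : AddSubgroup A, Σ L : AddSubgroup B, K →+ B ⧸ L =>
      graphMod x.1 x.2.1 x.2.2 := by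
  rintro ⟨K, L, f⟩ ⟨K', L', f'⟩ (h : graphMod K L f = graphMod K' L' f')
  obtain rfl : K = K' := by rw [← fst_map_graphMod K L f, h, fst_map_graphMod]
  obtain rfl : L = L' := by rw [← inr_comap_graphMod K L f, h, inr_comap_graphMod]
  obtain rfl : f = f' := by
    ext ⟨a, ha⟩
    obtain ⟨b, hb⟩ := QuotientAddGroup.mk_surjective (f ⟨a, ha⟩)
    obtain ⟨_, hb'⟩ := mem_graphMod.1 (h ▸ mem_graphMod.2 ⟨ha, hb.symm⟩)
    exact hb.symm.trans hb'.symm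
  rfl

lemma exists_graphMod_eq (H : AddSubgroup (A × B)) :
    ∃ (K : AddSubgroup A) (L : AddSubgroup B) (f : K →+ B ⧸ L), graphMod K L f = H := by
  let K := H.map (AddMonoidHom.fst A B)
  let L := H.comap (AddMonoidHom.inr A B)
  let toFst : H →+ K := (AddMonoidHom.fst A B).addSubgroupMap H
  let toQuotient : H →+ B ⧸ L :=
    ((QuotientAddGroup.mk' L).comp (AddMonoidHom.snd A B)).comp H.subtype
  have mk_eq_mk {a : A} {b b' : B} (h : (a, b) ∈ H) (h' : (a, b') ∈ H) : (b : B ⧸ L) = b' := by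
    rw [QuotientAddGroup.eq]
    simpa [L] using H.add_mem (H.neg_mem h) h'
  obtain ⟨f, hf⟩ := AddMonoidHom.exists_range_eq_graph (f := toFst.prod toQuotient)
    ((AddMonoidHom.fst A B).addSubgroupMap_surjective H)
    (by
      rintro ⟨⟨a, b⟩, h⟩ ⟨⟨a', b'⟩, h'⟩ haa'
      obtain rfl : a = a' := congrArg Subtype.val haa'
      exact mk_eq_mk h h')
  have apply_eq {a : A} {b : B} (h : (a, b) ∈ H) : f ⟨a, (a, b), h, rfl⟩ = b := by
    have mem_range : toFst.prod toQuotient ⟨(a, b), h⟩ ∈ (toFst.prod toQuotient).range := ⟨_, rfl⟩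
    exact AddMonoidHom.mem_graph.1 (hf ▸ mem_range)
  refine ⟨K, L, f, AddSubgroup.ext fun ⟨a, b⟩ => mem_graphMod.trans ⟨?_, fun h => ⟨_, apply_eq h⟩⟩⟩
  rintro ⟨⟨⟨a, b'⟩, h', rfl⟩, hb⟩
  have hL : -b' + b ∈ L := QuotientAddGroup.eq.1 ((apply_eq h').symm.trans hb)
  simpa using H.add_mem h' (AddSubgroup.mem_comap.1 hL)

lemma graphMod_bijective :
    Function.Bijective fun x : Σ K : AddSubgroup A, Σ L : AddSubgroup B, K →+ B ⧸ L =>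
      graphMod x.1 x.2.1 x.2.2 :=
  ⟨graphMod_injective, fun H =>
    let ⟨K, L, f, hH⟩ := exists_graphMod_eq H
    ⟨⟨K, L, f⟩, hH⟩⟩

lemma card_addSubgroup_prod [Finite A] [Finite B] [Fintype (AddSubgroup A)]
    [Fintype (AddSubgroup B)] :
    Nat.card (AddSubgroup (A × B)) =
      ∑ K : AddSubgroup A, ∑ L : AddSubgroup B, Nat.card (K →+ B ⧸ L) := by
  have hom_finite (K : AddSubgroup A) (L : AddSubgroup B) : Finite (K →+ B ⧸ L) :=
    DFunLike.finite _
  rw [← Nat.card_congr (Equiv.ofBijective _ graphMod_bijective), Nat.card_sigma]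
  exact Finset.sum_congr rfl fun K _ => Nat.card_sigma

end ProductSubgroups

section CyclicGroups

lemma card_addMonoidHom_of_isAddCyclic (A B : Type*) [AddGroup A] [AddCommGroup B]
    [hA : IsAddCyclic A] [IsAddCyclic B] [Finite B] :
    Nat.card (A →+ B) = (Nat.card A).gcd (Nat.card B) := by
  let homEquiv : (A →+ B) ≃ (ZMod (Nat.card A) →+ B) :=
    (zmodAddCyclicAddEquiv hA).symm.addMonoidHomCongrLeftEquiv
  let kerEquiv : {f : ℤ →+ B // f (Nat.card A) = 0} ≃
      (nsmulAddMonoidHom (α := B) (Nat.card A)).ker :=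
    Equiv.subtypeEquiv (zmultiplesHom B).symm fun f => by
      have : f (Nat.card A : ℤ) = Nat.card A • f 1 := by rw [← map_nsmul, nsmul_one]
      rw [this]
      rfl
  rw [Nat.card_congr homEquiv, ← Nat.card_congr (ZMod.lift (Nat.card A)), Nat.card_congr kerEquiv,
    IsAddCyclic.card_nsmulAddMonoidHom_ker, Nat.gcd_comm]

variable {A : Type*} [AddCommGroup A] [Finite A] [IsAddCyclic A]

lemma nsmulAddMonoidHom_ker_card (K : AddSubgroup A) :
    (nsmulAddMonoidHom (α := A) (Nat.card K)).ker = K := by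
  refine (AddSubgroup.eq_of_le_of_card_ge (fun x hx => ?_) ?_).symm
  · exact congrArg Subtype.val (card_nsmul_eq_zero' (x := (⟨x, hx⟩ : K)))
  · rw [IsAddCyclic.card_nsmulAddMonoidHom_ker, Nat.gcd_eq_right K.card_addSubgroup_dvd_card]

lemma sum_addSubgroup_card [Fintype (AddSubgroup A)] {M : Type*} [AddCommMonoid M] (F : ℕ → M) :
    ∑ K : AddSubgroup A, F (Nat.card K) = ∑ d ∈ (Nat.card A).divisors, F d := by
  refine Finset.sum_nbij' (fun K => Nat.card K) (fun d => (nsmulAddMonoidHom (α := A) d).ker)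
    (fun K _ => Nat.mem_divisors.2 ⟨K.card_addSubgroup_dvd_card, Nat.card_pos.ne'⟩)
    (fun _ _ => Finset.mem_univ _) (fun K _ => nsmulAddMonoidHom_ker_card K) (fun d hd => ?_)
    (fun _ _ => rfl)
  rw [IsAddCyclic.card_nsmulAddMonoidHom_ker, Nat.gcd_eq_right (Nat.dvd_of_mem_divisors hd)]

lemma card_addSubgroup_prod_of_isAddCyclic (A B : Type*) [AddCommGroup A] [AddCommGroup B]
    [Finite A] [Finite B] [IsAddCyclic A] [IsAddCyclic B] :
    Nat.card (AddSubgroup (A × B)) =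
      ∑ d ∈ (Nat.card A).divisors, ∑ e ∈ (Nat.card B).divisors, d.gcd e := by
  have := Fintype.ofFinite (AddSubgroup A)
  have := Fintype.ofFinite (AddSubgroup B)
  have card_hom (K : AddSubgroup A) (L : AddSubgroup B) :
      Nat.card (K →+ B ⧸ L) = (Nat.card K).gcd (Nat.card B / Nat.card L) := by
    have : IsAddCyclic (B ⧸ L) :=
      isAddCyclic_of_surjective (QuotientAddGroup.mk' L) (QuotientAddGroup.mk'_surjective L)
    rw [card_addMonoidHom_of_isAddCyclic, L.card_eq_card_quotient_mul_card_addSubgroup,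
      Nat.mul_div_cancel _ Nat.card_pos]
  have sum_card_hom (K : AddSubgroup A) :
      ∑ L : AddSubgroup B, Nat.card (K →+ B ⧸ L) =
        ∑ e ∈ (Nat.card B).divisors, (Nat.card K).gcd e := by
    simp_rw [card_hom]
    rw [sum_addSubgroup_card fun l => (Nat.card K).gcd (Nat.card B / l), Nat.sum_div_divisors]
  simp_rw [card_addSubgroup_prod, sum_card_hom]
  exact sum_addSubgroup_card fun d => ∑ e ∈ (Nat.card B).divisors, d.gcd e

end CyclicGroups

section DivisorSums

open Finset

lemma card_filter_dvd_divisors {a c : ℕ} (hc : c ∣ a) :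
    #{d ∈ a.divisors | c ∣ d} = #(a / c).divisors := by
  obtain rfl | ha := eq_or_ne a 0
  · simp
  obtain ⟨a, rfl⟩ := hc
  have hc0 : 0 < c := Nat.pos_of_ne_zero (left_ne_zero_of_mul ha)
  rw [Nat.mul_div_cancel_left _ hc0]
  refine card_nbij' (· / c) (c * ·) ?_ ?_ ?_ ?_
  · simp only [coe_filter, Nat.mem_divisors, Set.MapsTo, Set.mem_ofPred_eq, mem_coe]
    rintro _ ⟨⟨hd, -⟩, d, rfl⟩
    rw [Nat.mul_div_cancel_left _ hc0]
    exact ⟨Nat.dvd_of_mul_dvd_mul_left hc0 hd, right_ne_zero_of_mul ha⟩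
  · simp only [coe_filter, Nat.mem_divisors, Set.MapsTo, Set.mem_ofPred_eq, mem_coe]
    exact fun d hd => ⟨⟨Nat.mul_dvd_mul_left c hd.1, ha⟩, dvd_mul_right c d⟩
  · exact fun d hd => Nat.mul_div_cancel' (mem_filter.1 hd).2
  · exact fun d _ => Nat.mul_div_cancel_left d hc0

lemma sum_divisors_sum_divisors_gcd (a b : ℕ) :
    ∑ d ∈ a.divisors, ∑ e ∈ b.divisors, d.gcd e =
      ∑ c ∈ (a.gcd b).divisors, c.totient * (#(a / c).divisors * #(b / c).divisors) := by
  calc ∑ d ∈ a.divisors, ∑ e ∈ b.divisors, d.gcd e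
      = ∑ p ∈ a.divisors ×ˢ b.divisors, ∑ c ∈ (p.1.gcd p.2).divisors, c.totient := by
        simp_rw [sum_product, Nat.sum_totient]
    _ = ∑ c ∈ (a.gcd b).divisors,
          ∑ _p ∈ {d ∈ a.divisors | c ∣ d} ×ˢ {e ∈ b.divisors | c ∣ e}, c.totient := by
        refine sum_comm' fun p c => ?_
        simp only [mem_product, mem_filter, Nat.mem_divisors, Nat.dvd_gcd_iff, ne_eq,
          Nat.gcd_eq_zero_iff]
        grind [Nat.dvd_trans, zero_dvd_iff]
    _ = _ := by
        refine sum_congr rfl fun c hc => ?_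
        have hc := Nat.dvd_gcd_iff.1 (Nat.dvd_of_mem_divisors hc)
        rw [sum_const, card_product, card_filter_dvd_divisors hc.1, card_filter_dvd_divisors hc.2,
          smul_eq_mul, mul_comm]

lemma sum_divisorsAntidiagonal_sq_sum_divisors_gcd {M : Type*} [AddCommMonoid M]
    (f : ℕ → ℕ → ℕ → M) (n : ℕ) :
    ∑ p ∈ (n ^ 2).divisorsAntidiagonal, ∑ c ∈ (p.1.gcd p.2).divisors, f c (p.1 / c) (p.2 / c) =
      ∑ q ∈ n.divisorsAntidiagonal, ∑ r ∈ (q.2 ^ 2).divisorsAntidiagonal, f q.1 r.1 r.2 := by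
  rw [sum_sigma', sum_sigma']
  refine sum_bij' (fun x _ => ⟨(x.2, n / x.2), (x.1.1 / x.2, x.1.2 / x.2)⟩)
    (fun y _ => ⟨(y.1.1 * y.2.1, y.1.1 * y.2.2), y.1.1⟩) ?_ ?_ ?_ ?_ ?_
  · rintro ⟨⟨a, b⟩, c⟩ h
    simp only [mem_sigma, Nat.mem_divisorsAntidiagonal, Nat.mem_divisors, Nat.dvd_gcd_iff] at h ⊢
    obtain ⟨⟨hab, hn⟩, ⟨⟨u, rfl⟩, v, rfl⟩, -⟩ := h
    obtain ⟨k, rfl⟩ : c ∣ n := (Nat.pow_dvd_pow_iff two_ne_zero).1 ⟨u * v, by rw [← hab]; ring⟩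
    have hc : 0 < c := by by_contra! h; simp_all
    have hk : k ≠ 0 := by rintro rfl; simp at hn
    simp only [Nat.mul_div_cancel_left _ hc]
    refine ⟨⟨trivial, by positivity⟩, ?_, by positivity⟩
    exact Nat.eq_of_mul_eq_mul_left (pow_pos hc 2) (by linear_combination hab)
  · rintro ⟨⟨c, k⟩, u, v⟩ h
    simp only [mem_sigma, Nat.mem_divisorsAntidiagonal, Nat.mem_divisors, Nat.dvd_gcd_iff] at h ⊢
    obtain ⟨⟨rfl, hn⟩, huv, hk⟩ := h
    have hcu : c * u ≠ 0 := mul_ne_zero (left_ne_zero_of_mul hn) (left_ne_zero_of_mul (huv ▸ hk))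
    exact ⟨⟨by linear_combination c ^ 2 * huv, pow_ne_zero 2 hn⟩,
      ⟨dvd_mul_right c u, dvd_mul_right c v⟩, Nat.gcd_ne_zero_left hcu⟩
  · rintro ⟨⟨a, b⟩, c⟩ h
    simp only [mem_sigma, Nat.mem_divisors, Nat.dvd_gcd_iff] at h
    simp [Nat.mul_div_cancel' h.2.1.1, Nat.mul_div_cancel' h.2.1.2]
  · rintro ⟨⟨c, k⟩, u, v⟩ h
    simp only [mem_sigma, Nat.mem_divisorsAntidiagonal] at h
    obtain ⟨⟨rfl, hn⟩, -⟩ := h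
    simp [Nat.pos_of_ne_zero (left_ne_zero_of_mul hn)]
  · exact fun _ _ => rfl

lemma card_divisorsAntidiagonal (n : ℕ) : #n.divisorsAntidiagonal = #n.divisors := by
  rw [← Nat.map_div_right_divisors, card_map]

lemma sum_divisorsAntidiagonal_ite_exists_pow {M : Type*} [AddCommMonoid M] {k : ℕ} (hk : k ≠ 0)
    (f : ℕ × ℕ → M) (n : ℕ) :
    ∑ p ∈ n.divisorsAntidiagonal, (if ∃ m, p.1 * p.2 = m ^ k then f p else 0) =
      Function.extend (· ^ k) (fun m => ∑ p ∈ (m ^ k).divisorsAntidiagonal, f p) 0 n := by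
  have condition_iff {p : ℕ × ℕ} (hp : p ∈ n.divisorsAntidiagonal) :
      (∃ m, p.1 * p.2 = m ^ k) ↔ ∃ m, m ^ k = n := by
    simp_rw [(Nat.mem_divisorsAntidiagonal.1 hp).1, eq_comm]
  rw [sum_congr rfl fun p hp => if_congr (condition_iff hp) rfl rfl]
  by_cases hn : ∃ m, m ^ k = n
  · simp only [hn, if_true]
    obtain ⟨m, rfl⟩ := hn
    rw [(Nat.pow_left_injective hk).extend_apply]
  · simp only [hn, if_false, sum_const_zero]
    rw [Function.extend_apply' _ _ _ hn, Pi.zero_apply]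

end DivisorSums

section ArithmeticFunctions

open ArithmeticFunction
open scoped ArithmeticFunction.Moebius ArithmeticFunction.sigma

/-- The arithmetic function `n ↦ ∑_{ab = n²} s(a, b)`: the coefficient of `(n²)^{-s}` in the double
Dirichlet series of the theorem. -/
noncomputable def numSubgroupsSq : ArithmeticFunction ℤ :=
  ⟨fun n => ∑ p ∈ (n ^ 2).divisorsAntidiagonal, (numSubgroups p.1 p.2 : ℤ), by simp⟩

/-- The arithmetic function `G(n) = (τ * τ)(n²)`, where `τ * τ` is the Dirichlet square of the
number-of-divisors function `τ = σ 0`. It is what remains of `numSubgroupsSq` after dividing out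
Euler's totient function under Dirichlet convolution. -/
noncomputable def sigmaZeroMulSq : ArithmeticFunction ℤ :=
  ⟨fun n => ((σ 0 * σ 0) (n ^ 2) : ℕ), by simp⟩

lemma numSubgroups_eq_sum_totient_mul {m n : ℕ} (hm : m ≠ 0) (hn : n ≠ 0) :
    numSubgroups m n = ∑ c ∈ (m.gcd n).divisors, c.totient * (σ 0 (m / c) * σ 0 (n / c)) := by
  have : NeZero m := ⟨hm⟩
  have : NeZero n := ⟨hn⟩
  simp_rw [numSubgroups, card_addSubgroup_prod_of_isAddCyclic, Nat.card_zmod,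
    sum_divisors_sum_divisors_gcd, sigma_zero_apply]

lemma moebius_mul_id_apply {n : ℕ} (hn : 0 < n) :
    (μ * (ArithmeticFunction.id : ArithmeticFunction ℤ)) n = n.totient := by
  rw [mul_apply]
  refine (sum_eq_iff_sum_mul_moebius_eq (R := ℤ) (f := fun m => m.totient) (g := fun m => m)).1
    (fun m _ => ?_) n hn
  exact_mod_cast Nat.sum_totient m

lemma numSubgroupsSq_eq_id_mul :
    numSubgroupsSq = (ArithmeticFunction.id : ArithmeticFunction ℤ) * (μ * sigmaZeroMulSq) := by
  rw [← mul_assoc, mul_comm _ μ]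
  ext n
  calc numSubgroupsSq n
      = ∑ p ∈ (n ^ 2).divisorsAntidiagonal, ∑ c ∈ (p.1.gcd p.2).divisors,
          (c.totient * (σ 0 (p.1 / c) * σ 0 (p.2 / c)) : ℤ) := by
        change ∑ p ∈ (n ^ 2).divisorsAntidiagonal, (numSubgroups p.1 p.2 : ℤ) = _
        refine Finset.sum_congr rfl fun p hp => ?_
        have ⟨hp₁, hp₂⟩ := Nat.ne_zero_of_mem_divisorsAntidiagonal hp
        exact_mod_cast numSubgroups_eq_sum_totient_mul hp₁ hp₂
    _ = ∑ q ∈ n.divisorsAntidiagonal, ∑ r ∈ (q.2 ^ 2).divisorsAntidiagonal,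
          (q.1.totient * (σ 0 r.1 * σ 0 r.2) : ℤ) :=
        sum_divisorsAntidiagonal_sq_sum_divisors_gcd
          (fun c u v => (c.totient * (σ 0 u * σ 0 v) : ℤ)) n
    _ = _ := by
        rw [mul_apply]
        refine Finset.sum_congr rfl fun q hq => ?_
        have hq₁ := (Nat.ne_zero_of_mem_divisorsAntidiagonal hq).1
        rw [moebius_mul_id_apply (Nat.pos_of_ne_zero hq₁), ← Finset.mul_sum]
        simp [sigmaZeroMulSq, mul_apply]

lemma sigma_zero_mul_sigma_zero_apply_le (n : ℕ) : (σ 0 * σ 0) n ≤ σ 0 n ^ 3 := by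
  calc (σ 0 * σ 0) n
      ≤ ∑ _p ∈ n.divisorsAntidiagonal, σ 0 n * σ 0 n := by
        rw [mul_apply]
        refine Finset.sum_le_sum fun p hp => ?_
        obtain ⟨rfl, hn⟩ := Nat.mem_divisorsAntidiagonal.1 hp
        simp_rw [sigma_zero_apply]
        gcongr
        exacts [dvd_mul_right _ _, dvd_mul_left _ _]
    _ = σ 0 n ^ 3 := by
        rw [Finset.sum_const, card_divisorsAntidiagonal, sigma_zero_apply, smul_eq_mul]
        ring

lemma sigma_zero_mul_le (m n : ℕ) : σ 0 (m * n) ≤ σ 0 m * σ 0 n := by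
  simp_rw [sigma_zero_apply, Nat.divisors_mul]
  exact Finset.card_mul_le

lemma abs_sigmaZeroMulSq_le (n : ℕ) : |sigmaZeroMulSq n| ≤ (σ 0 n : ℤ) ^ 6 := by
  have h : (σ 0 * σ 0) (n ^ 2) ≤ σ 0 n ^ 6 := calc
    (σ 0 * σ 0) (n ^ 2) ≤ σ 0 (n ^ 2) ^ 3 := sigma_zero_mul_sigma_zero_apply_le _
    _ ≤ (σ 0 n * σ 0 n) ^ 3 := by rw [sq]; gcongr; exact sigma_zero_mul_le n n
    _ = σ 0 n ^ 6 := by ring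
  change |(((σ 0 * σ 0) (n ^ 2) : ℕ) : ℤ)| ≤ _
  rw [abs_of_nonneg (Int.natCast_nonneg _)]
  exact_mod_cast h

end ArithmeticFunctions

section DirichletSeries

open LSeries ArithmeticFunction
open scoped LSeries.notation ArithmeticFunction.Moebius ArithmeticFunction.sigma

lemma LSeriesSummable_of_norm_le {f g : ℕ → ℂ} {s : ℂ} (hg : LSeriesSummable g s)
    (h : ∀ n, ‖f n‖ ≤ ‖g n‖) : LSeriesSummable f s :=
  .of_norm_bounded hg.norm fun n => norm_term_le s (h n)

lemma LSeriesSummable_sigma_zero_pow {s : ℂ} (hs : 1 < s.re) (k : ℕ) :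
    LSeriesSummable (fun n => (σ 0 n : ℂ) ^ k) s := by
  induction k with
  | zero => simpa using! LSeriesSummable_one_iff.2 hs
  | succ k ih =>
    refine LSeriesSummable_of_norm_le (ih.convolution ih) fun n => ?_
    have pow_succ_le : σ 0 n ^ (k + 1) ≤
        ∑ p ∈ n.divisorsAntidiagonal, σ 0 p.1 ^ k * σ 0 p.2 ^ k := calc
      σ 0 n ^ (k + 1) = ∑ _p ∈ n.divisorsAntidiagonal, σ 0 n ^ k := by
        rw [Finset.sum_const, card_divisorsAntidiagonal, ← sigma_zero_apply, smul_eq_mul, pow_succ']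
      _ ≤ _ := by
        refine Finset.sum_le_sum fun p hp => ?_
        rw [← (Nat.mem_divisorsAntidiagonal.1 hp).1, ← mul_pow]
        gcongr
        exact sigma_zero_mul_le _ _
    simp only [convolution_def]
    exact_mod_cast pow_succ_le

lemma LSeriesSummable_moebius_mul_sigmaZeroMulSq {s : ℂ} (hs : 1 < s.re) :
    LSeriesSummable ↗(μ * sigmaZeroMulSq) s := by
  have summable_sigmaZeroMulSq : LSeriesSummable ↗sigmaZeroMulSq s := by
    refine LSeriesSummable_of_norm_le (LSeriesSummable_sigma_zero_pow hs 6) fun n => ?_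
    rw [norm_pow, Complex.norm_natCast, Complex.norm_intCast]
    exact_mod_cast abs_sigmaZeroMulSq_le n
  have h := LSeriesSummable_mul (f := (μ : ArithmeticFunction ℂ))
    (g := (sigmaZeroMulSq : ArithmeticFunction ℂ)) (s := s)
    (by simpa using LSeriesSummable_moebius_iff.2 hs) (by simpa using summable_sigmaZeroMulSq)
  simpa [← intCoe_mul] using h

lemma LSeriesHasSum_natCast {s : ℂ} (hs : 2 < s.re) :
    LSeriesHasSum (fun n => (n : ℂ)) s (riemannZeta (s - 1)) := by
  have h : LSeriesHasSum 1 (s - 1) (riemannZeta (s - 1)) :=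
    LSeriesHasSum_one (by rw [Complex.sub_re, Complex.one_re]; linarith)
  suffices term_eq : term (fun n => (n : ℂ)) s = term 1 (s - 1) by rwa [LSeriesHasSum, term_eq]
  ext n
  obtain rfl | hn := eq_or_ne n 0
  · simp
  · have hn' : (n : ℂ) ≠ 0 := Nat.cast_ne_zero.2 hn
    rw [term_of_ne_zero hn, term_of_ne_zero hn, Complex.cpow_sub _ _ hn', Complex.cpow_one,
      Pi.one_apply, one_div_div]

lemma LSeriesHasSum_numSubgroupsSq {s : ℂ} (hs : 2 < s.re) :
    LSeriesHasSum ↗numSubgroupsSq s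
      (riemannZeta (s - 1) * LSeries ↗(μ * sigmaZeroMulSq) s) := by
  have hasSum_cofactor :=
    (LSeriesSummable_moebius_mul_sigmaZeroMulSq (one_lt_two.trans hs)).LSeriesHasSum
  have h := LSeriesHasSum_mul
    (f := ((ArithmeticFunction.id : ArithmeticFunction ℤ) : ArithmeticFunction ℂ))
    (g := ((μ * sigmaZeroMulSq : ArithmeticFunction ℤ) : ArithmeticFunction ℂ)) (s := s)
    (by simpa using LSeriesHasSum_natCast hs) (by simpa only [intCoe_apply] using hasSum_cofactor)
  rw [← intCoe_mul, ← numSubgroupsSq_eq_id_mul] at h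
  simpa only [intCoe_apply] using h

lemma term_extend_pow {k : ℕ} (hk : k ≠ 0) (a : ℕ → ℂ) (s : ℂ) :
    term (Function.extend (· ^ k) a 0) s = Function.extend (· ^ k) (term a (k * s)) 0 := by
  have pow_injective := Nat.pow_left_injective hk
  ext n
  by_cases hn : ∃ m, m ^ k = n
  · obtain ⟨m, rfl⟩ := hn
    rw [pow_injective.extend_apply, term_def, term_def, pow_injective.extend_apply, Nat.cast_pow,
      Complex.natCast_cpow_natCast_mul]
    simp [hk]
  · simp [term_def, Function.extend_apply' _ _ _ hn]

lemma LSeriesHasSum_extend_pow_iff {k : ℕ} (hk : k ≠ 0) {a : ℕ → ℂ} {s z : ℂ} :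
    LSeriesHasSum (Function.extend (· ^ k) a 0) s z ↔ LSeriesHasSum a (k * s) z := by
  rw [LSeriesHasSum, term_extend_pow hk, hasSum_extend_zero (Nat.pow_left_injective hk),
    LSeriesHasSum]

lemma hasSum_of_hasSum_sum_divisorsAntidiagonal {E : Type*} [NormedAddCommGroup E]
    [CompleteSpace E] {F : ℕ × ℕ → E} {z : E} (hF₀ : ∀ p : ℕ × ℕ, p.1 * p.2 = 0 → F p = 0)
    (hF : Summable fun n : ℕ => ∑ p ∈ n.divisorsAntidiagonal, ‖F p‖)
    (hz : HasSum (fun n : ℕ => ∑ p ∈ n.divisorsAntidiagonal, F p) z) : HasSum F z := by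
  let toPair : (Σ n : ℕ, n.divisorsAntidiagonal) → ℕ × ℕ := fun x => x.2
  have toPair_injective : Function.Injective toPair := by
    rintro ⟨m, p, hp⟩ ⟨n, q, hq⟩ (rfl : p = q)
    obtain rfl : m = n :=
      (Nat.mem_divisorsAntidiagonal.1 hp).1.symm.trans (Nat.mem_divisorsAntidiagonal.1 hq).1
    rfl
  have mem_range_toPair {p : ℕ × ℕ} (hp : p.1 * p.2 ≠ 0) : p ∈ Set.range toPair :=
    ⟨⟨p.1 * p.2, p, Nat.mem_divisorsAntidiagonal.2 ⟨rfl, hp⟩⟩, rfl⟩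
  refine (toPair_injective.hasSum_iff fun p hp => hF₀ p (not_imp_comm.1 mem_range_toPair hp)).1
    (hz.sigma_of_hasSum (fun n => ?_) ?_)
  · rw [← Finset.sum_coe_sort]
    exact hasSum_fintype _
  · refine .of_norm ((summable_sigma_of_nonneg fun _ => norm_nonneg _).2 ⟨fun n => .of_finite, ?_⟩)
    refine hF.congr fun n => ?_
    rw [tsum_fintype, ← Finset.sum_coe_sort]
    rfl

lemma sum_divisorsAntidiagonal_term (f : ℕ × ℕ → ℂ) (s : ℂ) (n : ℕ) :
    ∑ p ∈ n.divisorsAntidiagonal, term (fun _ => f p) s (p.1 * p.2) =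
      term (fun n => ∑ p ∈ n.divisorsAntidiagonal, f p) s n := by
  obtain rfl | hn := eq_or_ne n 0
  · simp
  · rw [term_of_ne_zero hn, Finset.sum_div]
    refine Finset.sum_congr rfl fun p hp => ?_
    rw [(Nat.mem_divisorsAntidiagonal.1 hp).1, term_of_ne_zero hn]

lemma sum_divisorsAntidiagonal_norm_term (f : ℕ × ℕ → ℂ) (s : ℂ) (n : ℕ) :
    ∑ p ∈ n.divisorsAntidiagonal, ‖term (fun _ => f p) s (p.1 * p.2)‖ =
      ‖term (fun n => ∑ p ∈ n.divisorsAntidiagonal, (‖f p‖ : ℂ)) s n‖ := by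
  obtain rfl | hn := eq_or_ne n 0
  · simp
  · rw [term_of_ne_zero hn, ← Complex.ofReal_sum, norm_div,
      Complex.norm_of_nonneg (Finset.sum_nonneg fun _ _ => norm_nonneg _), Finset.sum_div]
    refine Finset.sum_congr rfl fun p hp => ?_
    rw [(Nat.mem_divisorsAntidiagonal.1 hp).1, term_of_ne_zero hn, norm_div]

lemma hasSum_term_mul_of_LSeriesHasSum {f : ℕ × ℕ → ℂ} {s z : ℂ}
    (hf : LSeriesSummable (fun n => ∑ p ∈ n.divisorsAntidiagonal, (‖f p‖ : ℂ)) s)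
    (hz : LSeriesHasSum (fun n => ∑ p ∈ n.divisorsAntidiagonal, f p) s z) :
    HasSum (fun p : ℕ × ℕ => term (fun _ => f p) s (p.1 * p.2)) z := by
  refine hasSum_of_hasSum_sum_divisorsAntidiagonal (fun p hp => by rw [hp, term_zero]) ?_ ?_
  · simpa only [sum_divisorsAntidiagonal_norm_term] using hf.norm
  · simp_rw [sum_divisorsAntidiagonal_term]
    exact hz

lemma summable_abs_div_rpow_iff {h : ℕ → ℝ} {x : ℝ} (hx : x ≠ 0) :
    (Summable fun n : ℕ => |h n| / (n : ℝ) ^ x) ↔ LSeriesSummable (fun n => (h n : ℂ)) x := by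
  rw [LSeriesSummable, ← summable_norm_iff (f := term _ _)]
  refine summable_congr fun n => ?_
  obtain rfl | hn := eq_or_ne n 0
  · simp [hx]
  · rw [norm_term_eq, if_neg hn, Complex.norm_real, Real.norm_eq_abs, Complex.ofReal_re]

lemma hasSum_numSubgroups {s : ℂ} (hs : 1 < s.re) :
    HasSum (fun p : ℕ × ℕ => if 0 < p.1 ∧ 0 < p.2 ∧ ∃ n : ℕ, p.1 * p.2 = n ^ 2 then
        (numSubgroups p.1 p.2 : ℂ) / ((p.1 * p.2 : ℕ) : ℂ) ^ s else 0)
      (riemannZeta (2 * s - 1) * LSeries ↗(μ * sigmaZeroMulSq) (2 * s)) := by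
  let f (p : ℕ × ℕ) : ℕ := if ∃ n, p.1 * p.2 = n ^ 2 then numSubgroups p.1 p.2 else 0
  have two_lt : 2 < (2 * s).re := by rw [two_mul, Complex.add_re]; linarith
  have sum_f (n : ℕ) : ∑ p ∈ n.divisorsAntidiagonal, (f p : ℂ) =
      Function.extend (· ^ 2) (fun m => (numSubgroupsSq m : ℂ)) 0 n := by
    simp only [f, Nat.cast_ite, Nat.cast_zero]
    rw [sum_divisorsAntidiagonal_ite_exists_pow two_ne_zero (fun p => (numSubgroups p.1 p.2 : ℂ))]
    simp [numSubgroupsSq]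
  have hz : LSeriesHasSum (fun n => ∑ p ∈ n.divisorsAntidiagonal, (f p : ℂ)) s
      (riemannZeta (2 * s - 1) * LSeries ↗(μ * sigmaZeroMulSq) (2 * s)) := by
    simp_rw [sum_f]
    rw [LSeriesHasSum_extend_pow_iff two_ne_zero, Nat.cast_ofNat]
    exact LSeriesHasSum_numSubgroupsSq two_lt
  have hf : LSeriesSummable (fun n => ∑ p ∈ n.divisorsAntidiagonal, (‖(f p : ℂ)‖ : ℂ)) s := by
    simpa using hz.LSeriesSummable
  convert hasSum_term_mul_of_LSeriesHasSum hf hz using 2 with p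
  by_cases h0 : p.1 * p.2 = 0
  · rw [h0, term_zero, if_neg]
    rintro ⟨h₁, h₂, -⟩
    exact (mul_pos h₁ h₂).ne' h0
  · rw [term_of_ne_zero h0]
    simp only [f, Nat.pos_of_ne_zero (left_ne_zero_of_mul h0),
      Nat.pos_of_ne_zero (right_ne_zero_of_mul h0), true_and]
    split_ifs <;> simp

/-- The function `h` of the theorem: `(μ * G)(k)` at `n = k²`, where `G` is `sigmaZeroMulSq`, and
`0` if `n` is not a square. -/
noncomputable def squareCofactor : ℕ → ℝ :=
  Function.extend (· ^ 2) (fun k => ((μ * sigmaZeroMulSq) k : ℝ)) 0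

lemma ofReal_squareCofactor (n : ℕ) :
    (squareCofactor n : ℂ) = Function.extend (· ^ 2) ↗(μ * sigmaZeroMulSq) 0 n := by
  rw [squareCofactor, Function.apply_extend Complex.ofReal]
  congr 1

lemma LSeriesHasSum_squareCofactor {s : ℂ} (hs : 1 / 2 < s.re) :
    LSeriesHasSum (fun n => (squareCofactor n : ℂ)) s (LSeries ↗(μ * sigmaZeroMulSq) (2 * s)) := by
  have one_lt : 1 < (2 * s).re := by rw [two_mul, Complex.add_re]; linarith
  simp_rw [ofReal_squareCofactor]
  rw [LSeriesHasSum_extend_pow_iff two_ne_zero, Nat.cast_ofNat]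
  exact (LSeriesSummable_moebius_mul_sigmaZeroMulSq one_lt).LSeriesHasSum

end DirichletSeries

theorem stmt2 : ∃ h : ℕ → ℝ,
    (∀ σ : ℝ, 1 / 2 < σ → Summable fun n : ℕ => |h n| / (n : ℝ) ^ σ) ∧
    ∀ s : ℂ, 1 < s.re →
      (∑' p : ℕ × ℕ,
          if 0 < p.1 ∧ 0 < p.2 ∧ ∃ n : ℕ, p.1 * p.2 = n ^ 2 then
            (numSubgroups p.1 p.2 : ℂ) / ((p.1 * p.2 : ℕ) : ℂ) ^ s
          else 0)
        = riemannZeta (2 * s - 1) * ∑' n : ℕ, (h n : ℂ) / (n : ℂ) ^ s := by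
  refine ⟨squareCofactor, fun σ hσ => ?_, fun s hs => ?_⟩
  · rw [summable_abs_div_rpow_iff (by linarith)]
    exact (LSeriesHasSum_squareCofactor (by simpa using hσ)).LSeriesSummable
  · have hs0 : s ≠ 0 := by rintro rfl; norm_num at hs
    rw [(hasSum_numSubgroups hs).tsum_eq, ← (LSeriesHasSum_squareCofactor (by linarith)).LSeries_eq]
    simp_rw [LSeries, LSeries.term_of_ne_zero' hs0]
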